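/- Let R be a commutative semiring and R' a faithfully flat R-algebra. If M is an R-module such that R' ⊗_R M is finitely presented (resp. finitely generated) as an R'-module, then M is finitely presented (resp. finitely generated) as an R-module. -/

import Mathlib

/-!
Finite generation. Over a semiring, flatness still implies that `R' ⊗ -` preserves injections:
a map `φ` is injective exactly when the diagonal is its kernel pair, and the kernel pair is an
equalizer (`IsSemiflat.lTensor_injective`). Finitely many elements of `M` suffice to write down
generators of `R' ⊗ M`; if `N` is the submodule of `M` they span, then `R' ⊗ N → R' ⊗ M` is
bijective, hence so is `N → M` by faithfulness.

Finite presentation. By the first part there is a surjection `f : Rⁿ → M`. For a finite set `F` of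
pairs identified by `f`, let `C_F` be the quotient of `Rⁿ` by the congruence generated by `F`. Any
two elements of `R' ⊗ Rⁿ` with the same image in `R' ⊗ M` already agree in some `R' ⊗ C_F`
(`exists_finite_lTensor_eq`). Take a presentation `p', q' : R'^m' ⇉ R'^n' → R' ⊗ M` with quotient
map `f'`, a lift `g : R'^n' → R' ⊗ Rⁿ` of `f'` through `R' ⊗ f`, and a lift `h : R' ⊗ Rⁿ → R'^n'`
of `R' ⊗ f` through `f'`. One finite `F` witnesses all the identifications `g p' eᵢ = g q' eᵢ` and
`g h (1 ⊗ eₖ) = 1 ⊗ eₖ` in `R' ⊗ C_F`. The first family yields a map `R' ⊗ M → R' ⊗ C_F`, which by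
the second is a left inverse of the surjection `R' ⊗ C_F → R' ⊗ M`. Hence `R' ⊗ C_F ≅ R' ⊗ M`, so
`C_F ≅ M` by faithfulness, and `C_F` is finitely presented.
-/

/-!
Faithfully flat descent of module-finiteness over semirings: if `R'` is a faithfully
flat `R`-algebra and `R' ⊗ M` is finitely presented (resp. finitely generated) over
`R'`, then `M` is finitely presented (resp. finitely generated) over `R`.
-/

universe u

open TensorProduct

/-- `M` is flat over the commutative semiring `R`: tensoring with `M` preserves
equalizers (hence all finite limits). -/
def IsSemiflat (R : Type u) [CommSemiring R] (M : Type u) [AddCommMonoid M] [Module R M] : Prop :=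
  ∀ (N P : Type u) [AddCommMonoid N] [AddCommMonoid P] [Module R N] [Module R P]
    (f g : N →ₗ[R] P),
    Function.Injective (LinearMap.lTensor M (LinearMap.eqLocus f g).subtype) ∧
    LinearMap.range (LinearMap.lTensor M (LinearMap.eqLocus f g).subtype) =
      LinearMap.eqLocus (LinearMap.lTensor M f) (LinearMap.lTensor M g)

/-- An `R`-module `S` is faithful if a linear map `φ` is an isomorphism whenever
`S ⊗ φ` is. -/
def IsFaithfulMod (R : Type u) [CommSemiring R] (S : Type u) [AddCommMonoid S]
    [Module R S] : Prop :=
  ∀ (M N : Type u) [AddCommMonoid M] [AddCommMonoid N] [Module R M] [Module R N]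
    (φ : M →ₗ[R] N), Function.Bijective (LinearMap.lTensor S φ) → Function.Bijective φ

/-- `f : B → M` is a coequalizer of the pair `p q : A → B` in the category of
`R`-modules (stated via the universal property). -/
def IsCoequalizerPair (R : Type u) [CommSemiring R] {A B M : Type u}
    [AddCommMonoid A] [AddCommMonoid B] [AddCommMonoid M]
    [Module R A] [Module R B] [Module R M]
    (p q : A →ₗ[R] B) (f : B →ₗ[R] M) : Prop :=
  f.comp p = f.comp q ∧
  ∀ (Q : Type u) [AddCommMonoid Q] [Module R Q] (g : B →ₗ[R] Q),
    g.comp p = g.comp q → ∃! h : M →ₗ[R] Q, h.comp f = g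

/-- An `R`-module is finitely presented if it is a coequalizer of a pair of maps
between finitely generated free modules. -/
def FinitelyPresentedMod (R : Type u) [CommSemiring R] (M : Type u)
    [AddCommMonoid M] [Module R M] : Prop :=
  ∃ (m n : ℕ) (p q : (Fin m → R) →ₗ[R] (Fin n → R)) (f : (Fin n → R) →ₗ[R] M),
    IsCoequalizerPair R p q f

/-! ### Finitely generated congruences and tensor products -/

section Congruences

variable {R : Type u} [CommSemiring R]

/-- The quotient map by a module congruence, as a linear map. -/
def ModuleCon.mkLin {B : Type u} [AddCommMonoid B] [Module R B] (c : ModuleCon R B) :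
    B →ₗ[R] c.Quotient where
  toFun := c.mk'
  map_add' := map_add c.mk'
  map_smul' _ _ := rfl

theorem ModuleCon.mkLin_surjective {B : Type u} [AddCommMonoid B] [Module R B]
    (c : ModuleCon R B) : Function.Surjective c.mkLin :=
  Quotient.mk''_surjective

theorem ModuleCon.mkLin_eq {B : Type u} [AddCommMonoid B] [Module R B]
    (c : ModuleCon R B) {x y : B} : c.mkLin x = c.mkLin y ↔ c.r x y :=
  ⟨fun h => Quotient.exact h, fun h => Quotient.sound h⟩

/-- A linear map that respects the identifications made by a surjection factors through it. -/
theorem exists_comp_eq_of_surjective {A M Q : Type*} [AddCommMonoid A] [AddCommMonoid M]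
    [AddCommMonoid Q] [Module R A] [Module R M] [Module R Q] (f : A →ₗ[R] M)
    (hf : Function.Surjective f) (g : A →ₗ[R] Q) (h : ∀ a b, f a = f b → g a = g b) :
    ∃ k : M →ₗ[R] Q, k.comp f = g := by
  have key : ∀ a, g (Function.surjInv hf (f a)) = g a := fun a =>
    h _ _ (Function.surjInv_eq hf _)
  refine ⟨{ toFun := fun m => g (Function.surjInv hf m), map_add' := ?_, map_smul' := ?_ }, ?_⟩
  · intro x y
    obtain ⟨a, rfl⟩ := hf x
    obtain ⟨b, rfl⟩ := hf y
    rw [← map_add, key, key, key, map_add]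
  · intro r x
    obtain ⟨a, rfl⟩ := hf x
    rw [← map_smul, key, key, map_smul, RingHom.id_apply]
  · ext a
    exact key a

/-- The congruence on `B` generated by a set `F` of pairs, encoded as the pairs identified by every
linear map out of `B` that identifies the pairs in `F`. -/
def genCon (R : Type u) [CommSemiring R] {B : Type u} [AddCommMonoid B] [Module R B]
    (F : Set (B × B)) : ModuleCon R B where
  r x y := ∀ (Q : Type u) [AddCommMonoid Q] [Module R Q] (g : B →ₗ[R] Q),
    (∀ p ∈ F, g p.1 = g p.2) → g x = g y
  iseqv :=
    { refl := fun _ _ _ _ _ _ => rfl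
      symm := fun h Q _ _ g hg => (h Q g hg).symm
      trans := fun h h' Q _ _ g hg => (h Q g hg).trans (h' Q g hg) }
  add' h h' Q _ _ g hg := by rw [map_add, map_add, h Q g hg, h' Q g hg]
  smul s _ _ h Q _ _ g hg := by rw [map_smul, map_smul, h Q g hg]

variable {B : Type u} [AddCommMonoid B] [Module R B]

theorem genCon_mk_eq {F : Set (B × B)} {p : B × B} (hp : p ∈ F) :
    (genCon R F).mkLin p.1 = (genCon R F).mkLin p.2 :=
  (genCon R F).mkLin_eq.2 fun _ _ _ _ hg => hg p hp

theorem genCon_factor {F : Set (B × B)} {Q : Type u} [AddCommMonoid Q] [Module R Q]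
    (g : B →ₗ[R] Q) (hg : ∀ p ∈ F, g p.1 = g p.2) :
    ∃ k : (genCon R F).Quotient →ₗ[R] Q, k.comp (genCon R F).mkLin = g :=
  exists_comp_eq_of_surjective _ (genCon R F).mkLin_surjective g
    fun _ _ hab => (genCon R F).mkLin_eq.1 hab Q g hg

theorem lTensor_genCon_mono (S : Type u) [AddCommMonoid S] [Module R S] {F G : Set (B × B)}
    (hFG : F ⊆ G) {x y : S ⊗[R] B}
    (h : (genCon R F).mkLin.lTensor S x = (genCon R F).mkLin.lTensor S y) :
    (genCon R G).mkLin.lTensor S x = (genCon R G).mkLin.lTensor S y := by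
  obtain ⟨k, hk⟩ := genCon_factor (F := F) (genCon R G).mkLin fun p hp => genCon_mk_eq (hFG hp)
  rw [← hk, LinearMap.lTensor_comp_apply, h, ← LinearMap.lTensor_comp_apply]

/-- Two elements of `S ⊗ B` identified in `S ⊗ M` are already identified by finitely many of the
relations defining the quotient `M` of `B`: being identified by finitely many relations is itself a
congruence, and `S ⊗ M` maps to the quotient by it. -/
theorem exists_finite_lTensor_eq (S : Type u) [AddCommMonoid S] [Module R S]
    {M : Type u} [AddCommMonoid M] [Module R M] (f : B →ₗ[R] M) (hf : Function.Surjective f)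
    {x y : S ⊗[R] B} (hxy : f.lTensor S x = f.lTensor S y) :
    ∃ F : Set (B × B), F.Finite ∧ (∀ p ∈ F, f p.1 = f p.2) ∧
      (genCon R F).mkLin.lTensor S x = (genCon R F).mkLin.lTensor S y := by
  let c : ModuleCon R (S ⊗[R] B) :=
    { r := fun x y => ∃ F : Set (B × B), F.Finite ∧ (∀ p ∈ F, f p.1 = f p.2) ∧
        (genCon R F).mkLin.lTensor S x = (genCon R F).mkLin.lTensor S y
      iseqv :=
        { refl := fun _ => ⟨∅, Set.finite_empty, by simp, rfl⟩
          symm := fun ⟨F, h1, h2, h3⟩ => ⟨F, h1, h2, h3.symm⟩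
          trans := fun ⟨F, h1, h2, h3⟩ ⟨G, h1', h2', h3'⟩ =>
            ⟨F ∪ G, h1.union h1', fun p hp => hp.elim (h2 p) (h2' p),
              (lTensor_genCon_mono S Set.subset_union_left h3).trans
                (lTensor_genCon_mono S Set.subset_union_right h3')⟩ }
      add' := fun ⟨F, h1, h2, h3⟩ ⟨G, h1', h2', h3'⟩ =>
        ⟨F ∪ G, h1.union h1', fun p hp => hp.elim (h2 p) (h2' p), by
          rw [map_add, map_add, lTensor_genCon_mono S Set.subset_union_left h3,
            lTensor_genCon_mono S Set.subset_union_right h3']⟩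
      smul := fun s _ _ ⟨F, h1, h2, h3⟩ => ⟨F, h1, h2, by rw [map_smul, map_smul, h3]⟩ }
  let β : B →ₗ[R] S →ₗ[R] c.Quotient := ((TensorProduct.mk R S B).compr₂ c.mkLin).flip
  obtain ⟨γ, hγ⟩ := exists_comp_eq_of_surjective f hf β (by
    intro a b hab
    ext s
    refine c.mkLin_eq.2 ⟨{(a, b)}, Set.finite_singleton _, by simpa using hab, ?_⟩
    change s ⊗ₜ[R] _ = s ⊗ₜ[R] _
    rw [genCon_mk_eq (R := R) (Set.mem_singleton (a, b))])
  have key : (TensorProduct.lift γ.flip).comp (f.lTensor S) = c.mkLin := by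
    ext s b
    exact LinearMap.congr_fun (LinearMap.congr_fun hγ b) s
  refine c.mkLin_eq.1 ?_
  rw [← key, LinearMap.comp_apply, hxy, LinearMap.comp_apply]

/-- A single finite set of relations serves for finitely many pairs. -/
theorem exists_finite_lTensor_eq_family (S : Type u) [AddCommMonoid S] [Module R S]
    {M : Type u} [AddCommMonoid M] [Module R M] (f : B →ₗ[R] M) (hf : Function.Surjective f)
    {ι : Type*} [Finite ι] (x y : ι → S ⊗[R] B) (hxy : ∀ i, f.lTensor S (x i) = f.lTensor S (y i)) :
    ∃ F : Set (B × B), F.Finite ∧ (∀ p ∈ F, f p.1 = f p.2) ∧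
      ∀ i, (genCon R F).mkLin.lTensor S (x i) = (genCon R F).mkLin.lTensor S (y i) := by
  choose F h1 h2 h3 using fun i => exists_finite_lTensor_eq S f hf (hxy i)
  refine ⟨⋃ i, F i, Set.finite_iUnion h1, ?_, fun i =>
    lTensor_genCon_mono S (Set.subset_iUnion F i) (h3 i)⟩
  intro p hp
  obtain ⟨i, hi⟩ := Set.mem_iUnion.1 hp
  exact h2 i p hi

end Congruences

/-! ### Coequalizers of maps between free modules -/

section Coequalizers

variable {R : Type u} [CommSemiring R]

theorem IsCoequalizerPair.surjective {A B M : Type u}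
    [AddCommMonoid A] [AddCommMonoid B] [AddCommMonoid M]
    [Module R A] [Module R B] [Module R M]
    {p q : A →ₗ[R] B} {f : B →ₗ[R] M} (h : IsCoequalizerPair R p q f) :
    Function.Surjective f := by
  obtain ⟨k, hk, -⟩ := h.2 (LinearMap.range f) f.rangeRestrict (by
    ext a
    exact LinearMap.congr_fun h.1 a)
  have h1 : (LinearMap.range f).subtype.comp k = LinearMap.id := by
    refine (h.2 M f h.1).unique ?_ (LinearMap.id_comp f)
    rw [LinearMap.comp_assoc, hk]
    rfl
  intro m
  obtain ⟨b, hb⟩ := (k m).2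
  exact ⟨b, hb.trans (LinearMap.congr_fun h1 m)⟩

/-- A quotient of `Rⁿ` by finitely many relations is finitely presented. Here `M` is that quotient
up to the isomorphism `e`. -/
theorem finitelyPresentedMod_of_bijective {n : ℕ} {F : Set ((Fin n → R) × (Fin n → R))}
    (hF : F.Finite) {M : Type u} [AddCommMonoid M] [Module R M]
    (e : (genCon R F).Quotient →ₗ[R] M) (he : Function.Bijective e) :
    FinitelyPresentedMod R M := by
  obtain ⟨m, a, -, rfl⟩ := hF.fin_param
  let p := (Pi.basisFun R (Fin m)).constr R fun i => (a i).1
  let q := (Pi.basisFun R (Fin m)).constr R fun i => (a i).2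
  -- Coequalizing `p` and `q` means identifying the given pairs.
  have hpq : ∀ {Q : Type u} [AddCommMonoid Q] [Module R Q] (g : (Fin n → R) →ₗ[R] Q),
      g.comp p = g.comp q ↔ ∀ z ∈ Set.range a, g z.1 = g z.2 := by
    intro Q _ _ g
    have hp : ∀ i, p (Pi.basisFun R (Fin m) i) = (a i).1 := Module.Basis.constr_basis _ _ _
    have hq : ∀ i, q (Pi.basisFun R (Fin m) i) = (a i).2 := Module.Basis.constr_basis _ _ _
    constructor
    · rintro h _ ⟨i, rfl⟩
      rw [← hp, ← hq]
      exact LinearMap.congr_fun h _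
    · intro h
      refine (Pi.basisFun R (Fin m)).ext fun i => ?_
      rw [LinearMap.comp_apply, LinearMap.comp_apply, hp, hq]
      exact h _ ⟨i, rfl⟩
  let E := LinearEquiv.ofBijective e he
  refine ⟨m, n, p, q, e.comp (genCon R (Set.range a)).mkLin, (hpq _).2 fun z hz => ?_, ?_⟩
  · exact congrArg e (genCon_mk_eq hz)
  · intro Q _ _ g hg
    obtain ⟨k, hk⟩ := genCon_factor g ((hpq g).1 hg)
    refine ⟨k.comp E.symm.toLinearMap, ?_, ?_⟩
    · refine LinearMap.ext fun x => ?_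
      change k (E.symm (E ((genCon R (Set.range a)).mkLin x))) = g x
      rw [E.symm_apply_apply]
      exact LinearMap.congr_fun hk x
    · intro k' hk'
      refine LinearMap.ext fun y => ?_
      obtain ⟨c, rfl⟩ := he.2 y
      obtain ⟨x, rfl⟩ := (genCon R (Set.range a)).mkLin_surjective c
      change _ = k (E.symm (E ((genCon R (Set.range a)).mkLin x)))
      rw [E.symm_apply_apply]
      exact (LinearMap.congr_fun hk' x).trans (LinearMap.congr_fun hk x).symm

end Coequalizers

/-! ### Flat modules preserve injections -/

section Flat

variable {R : Type u} [CommSemiring R]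

/-- Tensoring with a flat module preserves injections, because the kernel pair of a map is an
equalizer, and the map is injective exactly when the kernel pair is the diagonal. -/
theorem IsSemiflat.lTensor_injective {S : Type u} [AddCommMonoid S] [Module R S]
    (hS : IsSemiflat R S) {N P : Type u} [AddCommMonoid N] [AddCommMonoid P] [Module R N]
    [Module R P] (φ : N →ₗ[R] P) (hφ : Function.Injective φ) :
    Function.Injective (φ.lTensor S) := by
  intro x y hxy
  let f := φ.comp (LinearMap.fst R N N)
  let g := φ.comp (LinearMap.snd R N N)
  have hfst : ((LinearMap.fst R N N).comp (LinearMap.eqLocus f g).subtype) =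
      ((LinearMap.snd R N N).comp (LinearMap.eqLocus f g).subtype) := by
    ext z
    exact hφ z.2
  let z : S ⊗[R] (N × N) :=
    (LinearMap.inl R N N).lTensor S x + (LinearMap.inr R N N).lTensor S y
  have hz1 : (LinearMap.fst R N N).lTensor S z = x := by
    simp only [z, map_add, ← LinearMap.lTensor_comp_apply, LinearMap.fst_comp_inl,
      LinearMap.fst_comp_inr]
    simp
  have hz2 : (LinearMap.snd R N N).lTensor S z = y := by
    simp only [z, map_add, ← LinearMap.lTensor_comp_apply, LinearMap.snd_comp_inl,
      LinearMap.snd_comp_inr]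
    simp
  have hz : z ∈ LinearMap.eqLocus (f.lTensor S) (g.lTensor S) := by
    rw [LinearMap.mem_eqLocus, LinearMap.lTensor_comp_apply, LinearMap.lTensor_comp_apply, hz1,
      hz2, hxy]
  rw [← (hS _ _ f g).2] at hz
  obtain ⟨w, hw⟩ := hz
  rw [← hz1, ← hz2, ← hw, ← LinearMap.lTensor_comp_apply, hfst, LinearMap.lTensor_comp_apply]

end Flat

/-! ### Descent along faithfully flat algebras -/

section Descent

variable {R R' : Type u} [CommSemiring R] [CommSemiring R'] [Algebra R R']

theorem finite_of_faithfullyFlat_baseChange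
    (hflat : IsSemiflat R R') (hfaithful : IsFaithfulMod R R')
    (M : Type u) [AddCommMonoid M] [Module R M] (hM : Module.Finite R' (R' ⊗[R] M)) :
    Module.Finite R M := by
  obtain ⟨s, hs⟩ := hM.fg_top
  obtain ⟨N, hN, hsN⟩ :=
    TensorProduct.exists_finite_submodule_right_of_setFinite (s : Set (R' ⊗[R] M)) s.finite_toSet
  have hsurj : Function.Surjective (N.subtype.lTensor R') := by
    have h : Submodule.span R' (s : Set (R' ⊗[R] M)) ≤
        LinearMap.range (N.subtype.baseChange R') :=
      Submodule.span_le.2 fun x hx => hsN hx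
    rw [hs] at h
    exact fun x => h (Submodule.mem_top (x := x))
  have hbij := hfaithful _ _ N.subtype
    ⟨hflat.lTensor_injective _ N.injective_subtype, hsurj⟩
  exact Module.Finite.of_surjective N.subtype hbij.2

theorem finitelyPresentedMod_of_finite_of_baseChange (hfaithful : IsFaithfulMod R R')
    (M : Type u) [AddCommMonoid M] [Module R M] [Module.Finite R M]
    (hM : FinitelyPresentedMod R' (R' ⊗[R] M)) : FinitelyPresentedMod R M := by
  obtain ⟨n, f, hf⟩ := Module.Finite.exists_fin' R M
  obtain ⟨m', n', p', q', f', hcoeq⟩ := hM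
  have hf' := hcoeq.surjective
  have hRf : Function.Surjective (f.baseChange R') := LinearMap.lTensor_surjective R' hf
  obtain ⟨g, hg⟩ := Module.projective_lifting_property (f.baseChange R') f' hRf
  obtain ⟨h, hh⟩ := Module.projective_lifting_property f' (f.baseChange R') hf'
  obtain ⟨F, hFfin, hF, hrel⟩ := exists_finite_lTensor_eq_family R' f hf
    (Sum.elim (fun i : Fin m' => g (p' (Pi.single i 1)))
      (fun k : Fin n => g (h (1 ⊗ₜ Pi.single k 1))))
    (Sum.elim (fun i : Fin m' => g (q' (Pi.single i 1)))
      (fun k : Fin n => 1 ⊗ₜ Pi.single k 1)) (by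
      have hg' : ∀ v, f.lTensor R' (g v) = f' v := fun v => LinearMap.congr_fun hg v
      rintro (i | k)
      · simp only [Sum.elim_inl, hg']
        exact LinearMap.congr_fun hcoeq.1 _
      · simp only [Sum.elim_inr, hg']
        exact LinearMap.congr_fun hh _)
  obtain ⟨π, hπ⟩ := genCon_factor f hF
  let μ := (genCon R F).mkLin.baseChange R'
  have hμ : Function.Surjective μ :=
    LinearMap.lTensor_surjective R' (genCon R F).mkLin_surjective
  have hπμ : ∀ z, π.lTensor R' (μ z) = f.baseChange R' z := fun z => by
    change π.lTensor R' ((genCon R F).mkLin.lTensor R' z) = f.lTensor R' z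
    rw [← LinearMap.lTensor_comp_apply, hπ]
  obtain ⟨s, hs, -⟩ := hcoeq.2 _ (μ.comp g) (by
    refine (Pi.basisFun R' (Fin m')).ext fun i => ?_
    simpa [μ, LinearMap.baseChange_eq_ltensor] using hrel (Sum.inl i))
  have hμgh : (μ.comp g).comp h = μ := by
    refine ((Pi.basisFun R (Fin n)).baseChange R').ext fun k => ?_
    simpa [μ, LinearMap.baseChange_eq_ltensor] using hrel (Sum.inr k)
  have hleft : ∀ c, s (π.lTensor R' c) = c := by
    intro c
    obtain ⟨z, rfl⟩ := hμ c
    rw [hπμ, ← hh, LinearMap.comp_apply]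
    exact (LinearMap.congr_fun hs _).trans (LinearMap.congr_fun hμgh z)
  have hsurj : Function.Surjective π := fun x => by
    obtain ⟨a, rfl⟩ := hf x
    exact ⟨_, LinearMap.congr_fun hπ a⟩
  exact finitelyPresentedMod_of_bijective hFfin π (hfaithful _ _ π
    ⟨Function.LeftInverse.injective hleft, LinearMap.lTensor_surjective R' hsurj⟩)

end Descent

/-- Descent of finite presentation (resp. finite generation) along a faithfully flat
algebra over a commutative semiring. -/
theorem finitelyPresented_of_faithfullyFlat_baseChange
    (R R' : Type u) [CommSemiring R] [CommSemiring R'] [Algebra R R']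
    (hflat : IsSemiflat R R') (hfaithful : IsFaithfulMod R R')
    (M : Type u) [AddCommMonoid M] [Module R M] :
    (FinitelyPresentedMod R' (R' ⊗[R] M) → FinitelyPresentedMod R M) ∧
    (Module.Finite R' (R' ⊗[R] M) → Module.Finite R M) := by
  refine ⟨fun hM => ?_, finite_of_faithfullyFlat_baseChange hflat hfaithful M⟩
  have : Module.Finite R' (R' ⊗[R] M) := by
    obtain ⟨m, n, p, q, f, hf⟩ := hM
    exact Module.Finite.of_surjective f hf.surjective
  have := finite_of_faithfullyFlat_baseChange hflat hfaithful M this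
  exact finitelyPresentedMod_of_finite_of_baseChange hfaithful M hM
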